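/- arXiv:2404.16643 — 3 statements merged into one kernel-verified Lean document; each statement's English description precedes it below -/
import Mathlib

section
/- Let L be a finite lattice and let (D_*(L), δ_*) be the tensor square of the multichain complex, i.e. D_n(L) = ⊕_{i+j+1=n} M̃_i(L) ⊗ M̃_j(L) with differential δ_n = ⊕_{i+j+1=n}((∂_i ⊗ id) + (−1)^{i+1}(id ⊗ ∂_j)). Then the K-linear map ⧢ : D_n(L) → M̃_n(L) induced by c ⊗ c′ ↦ c ⧢ c′ is a chain map: for every n ≥ 0 and every α ∈ D_n(L), ∂_n(⧢(α)) = ⧢(δ_n(α)). -/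
open Finsupp

noncomputable section

variable (K : Type) [Field K] (L : Type) [SemilatticeSup L]

/-- Order multichains with `n` entries (length `n - 1`) in the lattice `L`:
weakly decreasing tuples `(c₀ ≥ c₁ ≥ ⋯ ≥ c_{n-1})`. -/
def MChain (n : ℕ) : Type := {c : Fin n → L // Antitone c}

/-- `∂ₖ^{(j)}`: deletion of the `k`-th entry of an order multichain. -/
def mdel {n : ℕ} (k : Fin (n + 1)) (c : MChain L (n + 1)) : MChain L n :=
  ⟨c.1 ∘ k.succAbove, c.2.comp_monotone (Fin.strictMono_succAbove k).monotone⟩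

/-- Concatenation `c · c′` of tuples. -/
def concatT {a b n : ℕ} (h : a + b = n) (u : Fin a → L) (v : Fin b → L) : Fin n → L :=
  fun r => if hr : (r : ℕ) < a then u ⟨r, hr⟩ else v ⟨(r : ℕ) - a, by have := r.2; omega⟩

/-- The operator `τ` sending a tuple `(a₀, …, a_{n-1})` to the multichain
`(a₀ ∨ ⋯ ∨ a_{n-1} ≥ a₁ ∨ ⋯ ∨ a_{n-1} ≥ ⋯ ≥ a_{n-1})` of suffix joins. -/
def tauMul {n : ℕ} (a : Fin n → L) : MChain L n :=
  ⟨fun r => (Finset.Ici r).sup' ⟨r, Finset.mem_Ici.mpr le_rfl⟩ a, by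
    intro r r' hrr'
    apply Finset.sup'_le
    intro s hs
    exact Finset.le_sup' _ (Finset.mem_Ici.mpr (le_trans hrr' (Finset.mem_Ici.mp hs)))⟩

/-- An `(i,j)`-shuffle, in block form: `IsShuffleBlocks t σ` says that the permutation `σ`
is monotone on the preimage of the values `{0, …, t-1}` (the first block) and on the
preimage of the remaining values (the second block).  An `(i,j)`-shuffle of
`{0, 1, …, i+j+1}` is exactly `IsShuffleBlocks (i+1)`. -/
def IsShuffleBlocks {n : ℕ} (t : ℕ) (σ : Equiv.Perm (Fin n)) : Prop :=
  (∀ p q : Fin n, p < q → (σ p : ℕ) < t → (σ q : ℕ) < t → σ p < σ q) ∧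
  (∀ p q : Fin n, p < q → t ≤ (σ p : ℕ) → t ≤ (σ q : ℕ) → σ p < σ q)

/-- The index `ℓ - 1` (with the convention `0 - 1 = 0`). -/
def prevIdx {n : ℕ} (ℓ : Fin n) : Fin n := ⟨(ℓ : ℕ) - 1, by have := ℓ.2; omega⟩

/-- The set `A₁^{i,j}` of pairs `(ℓ, σ)` with `σ` an `(i,j)`-shuffle, `ℓ ≥ 1`,
`σ(ℓ-1) ∈ {0,…,i}` and `σ(ℓ) ∈ {i+1,…,i+j+1}`. -/
def shuffleA1 (i j : ℕ) : Set (Fin (i + j + 2) × Equiv.Perm (Fin (i + j + 2))) :=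
  {p | IsShuffleBlocks (i + 1) p.2 ∧ 1 ≤ (p.1 : ℕ) ∧
       (p.2 (prevIdx p.1) : ℕ) ≤ i ∧ i + 1 ≤ (p.2 p.1 : ℕ)}

/-- The set `A₂^{i,j}` of pairs `(ℓ, σ)` with `σ` an `(i,j)`-shuffle, `ℓ ≥ 1`,
`σ(ℓ-1) ∈ {i+1,…,i+j+1}` and `σ(ℓ) ∈ {0,…,i}`. -/
def shuffleA2 (i j : ℕ) : Set (Fin (i + j + 2) × Equiv.Perm (Fin (i + j + 2))) :=
  {p | IsShuffleBlocks (i + 1) p.2 ∧ 1 ≤ (p.1 : ℕ) ∧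
       i + 1 ≤ (p.2 (prevIdx p.1) : ℕ) ∧ (p.2 p.1 : ℕ) ≤ i}

/-- The set `A₃^{i,j}` of pairs `(ℓ, σ)` with `σ` an `(i,j)`-shuffle and
`σ(ℓ-1), σ(ℓ) ∈ {0,…,i}`, the condition on `σ(ℓ-1)` being regarded as true for `ℓ = 0`. -/
def shuffleA3 (i j : ℕ) : Set (Fin (i + j + 2) × Equiv.Perm (Fin (i + j + 2))) :=
  {p | IsShuffleBlocks (i + 1) p.2 ∧
       (1 ≤ (p.1 : ℕ) → (p.2 (prevIdx p.1) : ℕ) ≤ i) ∧ (p.2 p.1 : ℕ) ≤ i}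

/-- `M̃`: the `K`-vector space with basis the order multichains with `n` entries
(length `n-1`).  In particular `MGrp K L 0 ≅ K` is `M̃₋₁`, spanned by the empty
multichain. -/
abbrev MGrp (n : ℕ) : Type := MChain L n →₀ K

/-- The simplicial boundary `∂ = Σ (-1)^j ∂^{(j)}` on multichains. -/
def mbdry (n : ℕ) : MGrp K L (n + 1) →ₗ[K] MGrp K L n :=
  Finsupp.lsum K fun c => ∑ k : Fin (n + 1), ((-1 : K) ^ (k : ℕ)) • Finsupp.lsingle (mdel L k c)

/-- Transport along an equality of lengths. -/
def castMGrp {a b : ℕ} (h : a = b) : MGrp K L a ≃ₗ[K] MGrp K L b :=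
  Finsupp.domLCongr (Equiv.cast (congrArg (MChain L) h))

open Classical in
/-- The shuffle product of two basis multichains, with `p` resp. `q` entries:
`c ⧢ c′ = Σ_{σ ∈ S_{p-1,q-1}} sgn(σ) · τ((c·c′)_σ)`. -/
def shufPair {p q : ℕ} (c : MChain L p) (c' : MChain L q) : MGrp K L (p + q) :=
  ∑ σ : Equiv.Perm (Fin (p + q)),
    if IsShuffleBlocks p σ then
      ((Equiv.Perm.sign σ : ℤ) : K) • Finsupp.single (tauMul L (concatT L rfl c.1 c'.1 ∘ ⇑σ)) 1
    else 0

/-- The shuffle product `⧢ : M̃_{p-1} ⊗ M̃_{q-1} → M̃_{p+q-1}` as a bilinear map. -/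
def shufLin (p q : ℕ) : MGrp K L p →ₗ[K] MGrp K L q →ₗ[K] MGrp K L (p + q) :=
  Finsupp.lsum K fun c =>
    LinearMap.toSpanSingleton K _
      (Finsupp.lsum K fun c' => LinearMap.toSpanSingleton K _ (shufPair K L c c'))

open DirectSum TensorProduct

/-- Index set of the direct sum `D`: pairs of entry-counts `(p, q)` with `p + q = n`.
The summand `(p, q)` is `M̃_{p-1} ⊗ M̃_{q-1}`, so `Dmod K L (n+1)` is the paper's
`D_n(L) = ⊕_{i+j+1=n} M̃_i(L) ⊗ M̃_j(L)`. -/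
abbrev DIdx (n : ℕ) : Type := {pq : ℕ × ℕ // pq.1 + pq.2 = n}

/-- The tensor square `D` of the multichain complex (in entry-count grading). -/
abbrev Dmod (n : ℕ) : Type :=
  ⨁ pq : DIdx n, (MGrp K L pq.1.1 ⊗[K] MGrp K L pq.1.2)

/-- The component `(∂ ⊗ id)` of the differential of `D`, from the summand `(p, q)` of
`Dmod (n+1)`; it is zero when `p = 0` (there `∂ : M̃₋₁ → M̃₋₂ = 0`). -/
def deltaLeft (n : ℕ) : (pq : DIdx (n + 1)) →
    (MGrp K L pq.1.1 ⊗[K] MGrp K L pq.1.2) →ₗ[K] Dmod K L n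
  | ⟨(0, _), _⟩ => 0
  | ⟨(p + 1, q), h⟩ =>
      (DirectSum.lof K (DIdx n) _ ⟨(p, q), by omega⟩).comp
        (TensorProduct.map (mbdry K L p) LinearMap.id)

/-- The component `(-1)^{i+1} (id ⊗ ∂)` of the differential of `D`, from the summand
`(p, q)` (with `p = i + 1`, so the sign is `(-1)^p`); it is zero when `q = 0`. -/
def deltaRight (n : ℕ) : (pq : DIdx (n + 1)) →
    (MGrp K L pq.1.1 ⊗[K] MGrp K L pq.1.2) →ₗ[K] Dmod K L n
  | ⟨(_, 0), _⟩ => 0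
  | ⟨(p, q + 1), h⟩ =>
      ((-1 : K) ^ p) •
        (DirectSum.lof K (DIdx n) _ ⟨(p, q), by omega⟩).comp
          (TensorProduct.map LinearMap.id (mbdry K L q))

/-- The differential `δ = (∂ ⊗ id) + (-1)^{i+1} (id ⊗ ∂)` of the tensor square complex. -/
def deltaD (n : ℕ) : Dmod K L (n + 1) →ₗ[K] Dmod K L n :=
  DirectSum.toModule K (DIdx (n + 1)) _ fun pq => deltaLeft K L n pq + deltaRight K L n pq

/-- The total shuffle map `⧢ : D_n(L) → M̃_n(L)`, induced by `c ⊗ c′ ↦ c ⧢ c′` on each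
summand. -/
def shuffleTotal (n : ℕ) : Dmod K L n →ₗ[K] MGrp K L n :=
  DirectSum.toModule K (DIdx n) _ fun pq =>
    (castMGrp K L pq.2).toLinearMap.comp (TensorProduct.lift (shufLin K L pq.1.1 pq.1.2))

section Insertion

variable {n : ℕ}

/-- The permutation of `Fin (n + 1)` sending `k` to `m` and acting as `s` on the remaining
indices. -/
def insertPerm (k m : Fin (n + 1)) (s : Equiv.Perm (Fin n)) : Equiv.Perm (Fin (n + 1)) :=
  m.cycleRange⁻¹ * Equiv.Perm.decomposeFin.symm (0, s) * k.cycleRange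

theorem insertPerm_self (k m : Fin (n + 1)) (s : Equiv.Perm (Fin n)) :
    insertPerm k m s k = m := by
  simp [insertPerm, Equiv.Perm.inv_def]

theorem insertPerm_succAbove (k m : Fin (n + 1)) (s : Equiv.Perm (Fin n)) (x : Fin n) :
    insertPerm k m s (k.succAbove x) = m.succAbove (s x) := by
  simp [insertPerm, Equiv.Perm.inv_def]

theorem sign_insertPerm (k m : Fin (n + 1)) (s : Equiv.Perm (Fin n)) :
    Equiv.Perm.sign (insertPerm k m s) =
      (-1) ^ (k : ℕ) * ((-1) ^ (m : ℕ) * Equiv.Perm.sign s) := by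
  simp only [insertPerm, Equiv.Perm.sign_mul, Equiv.Perm.sign_inv, Fin.sign_cycleRange,
    Equiv.Perm.decomposeFin.symm_sign, if_true, one_mul]
  rw [mul_comm]

theorem insertPerm_bijective (k : Fin (n + 1)) :
    Function.Bijective fun x : Fin (n + 1) × Equiv.Perm (Fin n) => insertPerm k x.1 x.2 := by
  rw [Fintype.bijective_iff_injective_and_card]
  refine ⟨?_, by simp [Fintype.card_perm, Nat.factorial_succ]⟩
  rintro ⟨m, s⟩ ⟨m', s'⟩ h
  have hm : m = m' := by
    rw [← insertPerm_self k m s, ← insertPerm_self k m' s']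
    exact congrArg (fun σ : Equiv.Perm (Fin (n + 1)) => σ k) h
  subst hm
  have hs : s = s' := by
    ext x
    have hx := congrArg (fun σ : Equiv.Perm (Fin (n + 1)) => σ (k.succAbove x)) h
    simp only [insertPerm_succAbove] at hx
    rw [Fin.succAbove_right_injective hx]
  rw [hs]

theorem sum_perm_insertPerm {M : Type*} [AddCommMonoid M] (k : Fin (n + 1))
    (f : Equiv.Perm (Fin (n + 1)) → M) :
    ∑ σ, f σ = ∑ m, ∑ s, f (insertPerm k m s) := by
  rw [← Fintype.sum_prod_type']
  exact ((insertPerm_bijective k).sum_comp f).symm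

theorem isShuffleBlocks_iff {t : ℕ} {σ : Equiv.Perm (Fin n)} :
    IsShuffleBlocks t σ ↔
      ∀ x y : Fin n, x < y → ((σ x : ℕ) < t ↔ (σ y : ℕ) < t) → σ x < σ y := by
  constructor
  · intro h x y hxy hb
    by_cases hx : (σ x : ℕ) < t
    · exact h.1 x y hxy hx (hb.1 hx)
    · exact h.2 x y hxy (not_lt.1 hx) (not_lt.1 fun hy => hx (hb.2 hy))
  · intro h
    exact ⟨fun x y hxy hx hy => h x y hxy (by tauto),
      fun x y hxy hx hy => h x y hxy (by omega)⟩

theorem IsShuffleBlocks.le_iff_le {t : ℕ} {σ : Equiv.Perm (Fin n)} (h : IsShuffleBlocks t σ)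
    {x y : Fin n} (hb : (σ x : ℕ) < t ↔ (σ y : ℕ) < t) : σ x ≤ σ y ↔ x ≤ y := by
  rw [isShuffleBlocks_iff] at h
  constructor
  · intro hle
    by_contra hlt
    exact absurd (h y x (not_le.1 hlt) hb.symm) (not_lt.2 hle)
  · intro hle
    rcases hle.eq_or_lt with rfl | hlt
    · exact le_rfl
    · exact (h x y hlt hb).le

/-- The size of the first block after removing the value `m`, if it was `t` before. -/
def blockSize (t m : ℕ) : ℕ := if m < t then t - 1 else t

theorem val_succAbove (m : Fin (n + 1)) (y : Fin n) :
    (m.succAbove y : ℕ) = if (y : ℕ) < m then (y : ℕ) else y + 1 := by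
  unfold Fin.succAbove
  simp only [Fin.lt_def, Fin.val_castSucc]
  split_ifs <;> rfl

theorem succAbove_lt_iff_lt_blockSize (t : ℕ) (m : Fin (n + 1)) (y : Fin n) :
    (m.succAbove y : ℕ) < t ↔ (y : ℕ) < blockSize t m := by
  rw [val_succAbove, blockSize]
  split_ifs <;> omega

theorem isShuffleBlocks_insertPerm_iff (t : ℕ) (k m : Fin (n + 1)) (s : Equiv.Perm (Fin n)) :
    IsShuffleBlocks t (insertPerm k m s) ↔
      IsShuffleBlocks (blockSize t m) s ∧
        ∀ x : Fin n, ((s x : ℕ) < blockSize t m ↔ (m : ℕ) < t) →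
          ((x : ℕ) < k ↔ (s x : ℕ) < m) := by
  simp only [isShuffleBlocks_iff]
  constructor
  · intro h
    refine ⟨fun x y hxy hb => ?_, fun x hb => ?_⟩
    · have := h (k.succAbove x) (k.succAbove y) (Fin.succAbove_lt_succAbove_iff.2 hxy)
      simpa only [insertPerm_succAbove, succAbove_lt_iff_lt_blockSize, hb, forall_const,
        Fin.succAbove_lt_succAbove_iff, true_imp_iff] using this
    · have h₁ := h (k.succAbove x) k
      have h₂ := h k (k.succAbove x)
      simp only [insertPerm_succAbove, insertPerm_self, succAbove_lt_iff_lt_blockSize, hb,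
        true_imp_iff] at h₁ h₂
      simp only [Fin.lt_def, val_succAbove] at h₁ h₂
      split_ifs at h₁ h₂ <;> omega
  · rintro ⟨h, h'⟩ x y hxy hb
    rcases Fin.eq_self_or_eq_succAbove k x with hx | ⟨x, rfl⟩ <;>
      rcases Fin.eq_self_or_eq_succAbove k y with hy | ⟨y, rfl⟩
    · exact absurd hxy (by simp [hx, hy])
    · subst hx
      simp only [insertPerm_succAbove, insertPerm_self, succAbove_lt_iff_lt_blockSize] at hb ⊢
      have := h' y hb.symm
      rw [Fin.lt_def, val_succAbove] at hxy ⊢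
      split_ifs at hxy ⊢ <;> omega
    · subst hy
      simp only [insertPerm_succAbove, insertPerm_self, succAbove_lt_iff_lt_blockSize] at hb ⊢
      have := h' x hb
      rw [Fin.lt_def, val_succAbove] at hxy ⊢
      split_ifs at hxy ⊢ <;> omega
    · simp only [insertPerm_succAbove, succAbove_lt_iff_lt_blockSize,
        Fin.succAbove_lt_succAbove_iff] at hxy hb ⊢
      exact h x y hxy hb

/-- Position `k` does not begin a new run: the entries of `σ` at positions `k - 1` and `k` lie
in the same block (vacuously true for `k = 0`). -/
def SameBlockAt (t : ℕ) (k : Fin (n + 1)) (σ : Equiv.Perm (Fin (n + 1))) : Prop :=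
  ∀ j : Fin n, k = j.succ → ((σ j.castSucc : ℕ) < t ↔ (σ k : ℕ) < t)

theorem sameBlockAt_insertPerm_iff (t : ℕ) (k m : Fin (n + 1)) (s : Equiv.Perm (Fin n)) :
    SameBlockAt t k (insertPerm k m s) ↔
      ∀ j : Fin n, k = j.succ → ((s j : ℕ) < blockSize t m ↔ (m : ℕ) < t) := by
  refine forall_congr' fun j => imp_congr_right fun hj => ?_
  have hj' : j.castSucc = k.succAbove j := by subst hj; simp
  rw [hj', insertPerm_succAbove, insertPerm_self, succAbove_lt_iff_lt_blockSize]

/-- A value `m` can be inserted in exactly one way into a shuffle so that the result is again a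
shuffle and `m` is either at the front or directly preceded by an entry of its own block. -/
theorem exists_insertPerm_position {t : ℕ} {m : Fin (n + 1)} {s : Equiv.Perm (Fin n)}
    (hs : IsShuffleBlocks (blockSize t m) s) :
    ∃ k₀, ∀ k, (IsShuffleBlocks t (insertPerm k m s) ∧ SameBlockAt t k (insertPerm k m s)) ↔
      k = k₀ := by
  simp only [isShuffleBlocks_insertPerm_iff, sameBlockAt_insertPerm_iff, hs, true_and]
  by_cases hm : (m : ℕ) = 0 ∨ (m : ℕ) = t
  · have hnot (x : Fin n) (hx : (s x : ℕ) < blockSize t m ↔ (m : ℕ) < t) : ¬ (s x : ℕ) < m := by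
      unfold blockSize at hx
      split_ifs at hx <;> omega
    refine ⟨0, fun k => ⟨fun ⟨h₁, h₂⟩ => ?_, ?_⟩⟩
    · rcases Fin.eq_zero_or_eq_succ k with rfl | ⟨j, rfl⟩
      · rfl
      · have hj := h₂ j rfl
        exact absurd ((h₁ j hj).1 (by simp)) (hnot j hj)
    · rintro rfl
      exact ⟨fun x hx => by simpa using hnot x hx, fun j hj => absurd hj (Fin.succ_ne_zero j).symm⟩
  · push Not at hm
    obtain ⟨j₀, hj₀⟩ : ∃ j₀, (s j₀ : ℕ) = m - 1 :=
      ⟨s.symm ⟨m - 1, by omega⟩, by simp⟩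
    have hb₀ : (s j₀ : ℕ) < blockSize t m ↔ (m : ℕ) < t := by
      unfold blockSize
      split_ifs <;> omega
    have hle (x : Fin n) (hx : (s x : ℕ) < blockSize t m ↔ (m : ℕ) < t) :
        (s x : ℕ) < m ↔ (x : ℕ) ≤ j₀ := by
      rw [← Fin.le_def, ← hs.le_iff_le (hx.trans hb₀.symm), Fin.le_def]
      omega
    refine ⟨j₀.succ, fun k => ⟨fun ⟨h₁, h₂⟩ => ?_, ?_⟩⟩
    · have hk := (h₁ j₀ hb₀).2 (by omega)
      rcases Fin.eq_zero_or_eq_succ k with rfl | ⟨j, rfl⟩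
      · simp at hk
      · have hj := h₂ j rfl
        have := (hle j hj).1 ((h₁ j hj).1 (by simp))
        simp only [Fin.val_succ] at hk
        rw [Fin.succ_inj]
        omega
    · rintro rfl
      refine ⟨fun x hx => ?_, fun j hj => ?_⟩
      · rw [hle x hx, Fin.val_succ]
        omega
      · rwa [← Fin.succ_inj.1 hj]

theorem IsShuffleBlocks.mul_swap {t : ℕ} {σ : Equiv.Perm (Fin (n + 1))}
    (h : IsShuffleBlocks t σ) (j : Fin n)
    (hj : ¬ ((σ j.castSucc : ℕ) < t ↔ (σ j.succ : ℕ) < t)) :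
    IsShuffleBlocks t (σ * Equiv.swap j.castSucc j.succ) := by
  rw [isShuffleBlocks_iff] at h ⊢
  intro x y hxy hb
  rw [Equiv.Perm.mul_apply, Equiv.Perm.mul_apply] at hb ⊢
  refine h _ _ ?_ hb
  by_contra hlt
  have key : x = j.castSucc ∧ y = j.succ := by
    rw [Equiv.swap_apply_def, Equiv.swap_apply_def] at hlt
    simp only [Fin.ext_iff, Fin.lt_def, Fin.val_castSucc, Fin.val_succ] at *
    split_ifs at hlt <;> simp_all <;> omega
  rw [key.1, key.2, Equiv.swap_apply_left, Equiv.swap_apply_right] at hb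
  exact hj hb.symm

end Insertion

section Deletion

variable {L} {n : ℕ}

theorem mdel_tauMul (k : Fin (n + 1)) (a : Fin (n + 1) → L)
    (ha : ∀ j : Fin n, k = j.succ → a k ≤ a j.castSucc) :
    mdel L k (tauMul L a) = tauMul L (a ∘ k.succAbove) := by
  refine Subtype.ext (funext fun r => le_antisymm ?_ ?_)
  · refine Finset.sup'_le ⟨_, Finset.mem_Ici.2 le_rfl⟩ _ fun x hx => ?_
    rw [Finset.mem_Ici] at hx
    have hmem (y : Fin n) (hy : k.succAbove r ≤ k.succAbove y) :
        a (k.succAbove y) ≤ (tauMul L (a ∘ k.succAbove)).1 r :=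
      Finset.le_sup' (a ∘ k.succAbove)
        (Finset.mem_Ici.2 (Fin.succAbove_le_succAbove_iff.1 hy))
    rcases Fin.eq_self_or_eq_succAbove k x with rfl | ⟨y, rfl⟩
    · have hlt := lt_of_le_of_ne hx (Fin.succAbove_ne x r)
      rcases Fin.eq_zero_or_eq_succ x with rfl | ⟨j, rfl⟩
      · exact absurd hlt (Fin.not_lt_zero _)
      · have hj : j.succ.succAbove j = j.castSucc := by simp
        refine (ha j rfl).trans ?_
        rw [← hj]
        refine hmem j ?_
        rw [hj, Fin.le_def]
        simpa [Fin.lt_def, Nat.lt_succ_iff] using hlt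
    · exact hmem y hx
  · refine Finset.sup'_le ⟨_, Finset.mem_Ici.2 le_rfl⟩ _ fun x hx => ?_
    exact Finset.le_sup' a
      (Finset.mem_Ici.2 (Fin.succAbove_le_succAbove_iff.2 (Finset.mem_Ici.1 hx)))

theorem mdel_tauMul_comp_swap (j : Fin n) (a : Fin (n + 1) → L) :
    mdel L j.succ (tauMul L (a ∘ Equiv.swap j.castSucc j.succ)) =
      mdel L j.succ (tauMul L a) := by
  have key (b : Fin (n + 1) → L) (r : Fin n) :
      (mdel L j.succ (tauMul L (b ∘ Equiv.swap j.castSucc j.succ))).1 r ≤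
        (mdel L j.succ (tauMul L b)).1 r := by
    refine Finset.sup'_le ⟨_, Finset.mem_Ici.2 le_rfl⟩ _ fun x hx => Finset.le_sup' b ?_
    rw [Finset.mem_Ici] at hx ⊢
    have hne := Fin.succAbove_ne j.succ r
    rw [Equiv.swap_apply_def]
    simp only [Fin.le_def, ne_eq, Fin.ext_iff] at hx hne ⊢
    split_ifs <;> simp_all <;> omega
  refine Subtype.ext (funext fun r => le_antisymm (key a r) ?_)
  have := key (a ∘ Equiv.swap j.castSucc j.succ) r
  rwa [Function.comp_assoc, ← Equiv.coe_trans, Equiv.swap_swap, Equiv.coe_refl,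
    Function.comp_id] at this

end Deletion

section Boundary

variable {L} {n : ℕ}

open Classical in
/-- The signed sum of the multichains `τ(a_σ)` over all shuffles `σ` of the blocks `[0, t)` and
`[t, n)`. -/
def shuffleSum (t : ℕ) (a : Fin n → L) : MGrp K L n :=
  ∑ σ : Equiv.Perm (Fin n),
    if IsShuffleBlocks t σ then
      ((Equiv.Perm.sign σ : ℤ) : K) • Finsupp.single (tauMul L (a ∘ ⇑σ)) 1
    else 0

theorem castMGrp_shufPair {p q : ℕ} (h : p + q = n) (c : MChain L p) (c' : MChain L q) :
    castMGrp K L h (shufPair K L c c') = shuffleSum K p (concatT L h c.1 c'.1) := by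
  subst h
  have hcast : castMGrp K L (rfl : p + q = p + q) = LinearEquiv.refl K _ := by
    ext x : 1
    simp [castMGrp]
  rw [hcast]
  rfl

theorem mbdry_single (c : MChain L (n + 1)) :
    mbdry K L n (Finsupp.single c 1) =
      ∑ k : Fin (n + 1), (-1 : K) ^ (k : ℕ) • Finsupp.single (mdel L k c) 1 := by
  simp [mbdry]

open Classical in
theorem sum_not_sameBlockAt_eq_zero (t : ℕ) (k : Fin (n + 1)) (a : Fin (n + 1) → L) :
    ∑ σ : Equiv.Perm (Fin (n + 1)),
      (if IsShuffleBlocks t σ ∧ ¬ SameBlockAt t k σ then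
        ((Equiv.Perm.sign σ : ℤ) : K) • Finsupp.single (mdel L k (tauMul L (a ∘ ⇑σ))) (1 : K)
      else 0) = 0 := by
  rcases Fin.eq_zero_or_eq_succ k with rfl | ⟨j, rfl⟩
  · refine Finset.sum_eq_zero fun σ _ => if_neg fun h => h.2 fun j hj => ?_
    exact absurd hj (Fin.succ_ne_zero j).symm
  have hsame (σ : Equiv.Perm (Fin (n + 1))) :
      SameBlockAt t j.succ σ ↔ ((σ j.castSucc : ℕ) < t ↔ (σ j.succ : ℕ) < t) :=
    ⟨fun h => h j rfl, fun h i hi => by rwa [← Fin.succ_inj.1 hi]⟩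
  have hne : j.castSucc ≠ j.succ := (Fin.castSucc_lt_succ).ne
  simp only [hsame]
  rw [← Finset.sum_filter]
  refine Finset.sum_involution (fun σ _ => σ * Equiv.swap j.castSucc j.succ) ?_ ?_ ?_ ?_
  · intro σ _
    rw [Equiv.Perm.coe_mul, ← Function.comp_assoc, mdel_tauMul_comp_swap]
    simp [Equiv.Perm.sign_swap hne]
  · intro σ _ _ h
    exact hne (Equiv.swap_eq_one_iff.1 (mul_eq_left.1 h))
  · intro σ hσ
    simp only [Finset.mem_filter, Finset.mem_univ, true_and] at hσ ⊢
    refine ⟨hσ.1.mul_swap j hσ.2, fun h => hσ.2 ?_⟩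
    simpa using h.symm
  · intro σ _
    simp [mul_assoc]

open Classical in
/-- The boundary of a shuffle sum is the alternating sum, over all entries of the underlying
tuple, of the shuffle sums with that entry deleted. -/
theorem mbdry_shuffleSum (t : ℕ) (a : Fin (n + 1) → L)
    (ha : ∀ x y : Fin (n + 1), x ≤ y → ((x : ℕ) < t ↔ (y : ℕ) < t) → a y ≤ a x) :
    mbdry K L n (shuffleSum K t a) =
      ∑ m : Fin (n + 1),
        (-1 : K) ^ (m : ℕ) • shuffleSum K (blockSize t m) (a ∘ m.succAbove) := by
  let f (k : Fin (n + 1)) (σ : Equiv.Perm (Fin (n + 1))) : MGrp K L n :=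
    ((Equiv.Perm.sign σ : ℤ) : K) • Finsupp.single (mdel L k (tauMul L (a ∘ ⇑σ))) (1 : K)
  have hdel (k m : Fin (n + 1)) (s : Equiv.Perm (Fin n))
      (h₁ : IsShuffleBlocks t (insertPerm k m s)) (h₂ : SameBlockAt t k (insertPerm k m s)) :
      mdel L k (tauMul L (a ∘ insertPerm k m s)) = tauMul L ((a ∘ m.succAbove) ∘ s) := by
    rw [mdel_tauMul]
    · congr 1
      funext x
      simp [insertPerm_succAbove]
    · intro j hj
      have hb := h₂ j hj
      refine ha _ _ ((h₁.le_iff_le hb).2 ?_) hb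
      rw [hj]
      exact Fin.castSucc_lt_succ.le
  calc mbdry K L n (shuffleSum K t a)
      = ∑ k : Fin (n + 1), (-1 : K) ^ (k : ℕ) •
          ∑ σ, if IsShuffleBlocks t σ then f k σ else 0 := by
        simp only [shuffleSum, map_sum, apply_ite (mbdry K L n), map_smul, map_zero,
          mbdry_single, Finset.smul_sum]
        rw [Finset.sum_comm]
        refine Finset.sum_congr rfl fun σ _ => ?_
        split_ifs
        · refine Finset.sum_congr rfl fun k _ => ?_
          rw [smul_comm]
        · simp
    _ = ∑ k : Fin (n + 1), (-1 : K) ^ (k : ℕ) •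
          ∑ σ, if IsShuffleBlocks t σ ∧ SameBlockAt t k σ then f k σ else 0 := by
        refine Finset.sum_congr rfl fun k _ => ?_
        congr 1
        refine Eq.trans ?_ ((congrArg _ (sum_not_sameBlockAt_eq_zero K t k a)).trans (add_zero _))
        rw [← Finset.sum_add_distrib]
        refine Finset.sum_congr rfl fun σ _ => ?_
        by_cases h₁ : IsShuffleBlocks t σ <;> by_cases h₂ : SameBlockAt t k σ <;>
          simp [h₁, h₂, f]
    _ = ∑ m : Fin (n + 1), ∑ s : Equiv.Perm (Fin n), ∑ k : Fin (n + 1),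
          if IsShuffleBlocks t (insertPerm k m s) ∧ SameBlockAt t k (insertPerm k m s) then
            (-1 : K) ^ (m : ℕ) • ((Equiv.Perm.sign s : ℤ) : K) •
              Finsupp.single (tauMul L ((a ∘ m.succAbove) ∘ s)) (1 : K)
          else 0 := by
        simp_rw [fun k => sum_perm_insertPerm k fun σ =>
          if IsShuffleBlocks t σ ∧ SameBlockAt t k σ then f k σ else 0, Finset.smul_sum]
        rw [Finset.sum_comm]
        refine Finset.sum_congr rfl fun m _ => ?_
        rw [Finset.sum_comm]
        refine Finset.sum_congr rfl fun s _ => Finset.sum_congr rfl fun k _ => ?_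
        split_ifs with h
        · simp only [f]
          rw [hdel k m s h.1 h.2, sign_insertPerm, smul_smul, smul_smul]
          congr 1
          push_cast
          rw [← mul_assoc, ← mul_assoc, ← pow_add, Even.neg_one_pow ⟨_, rfl⟩, one_mul]
        · simp
    _ = _ := by
        refine Finset.sum_congr rfl fun m _ => ?_
        rw [shuffleSum, Finset.smul_sum]
        refine Finset.sum_congr rfl fun s _ => ?_
        by_cases hs : IsShuffleBlocks (blockSize t m) s
        · obtain ⟨k₀, hk₀⟩ := exists_insertPerm_position hs
          simp [hk₀, hs]
        · have (k : Fin (n + 1)) : ¬ (IsShuffleBlocks t (insertPerm k m s) ∧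
              SameBlockAt t k (insertPerm k m s)) := fun h =>
            hs ((isShuffleBlocks_insertPerm_iff t k m s).1 h.1).1
          simp [this, hs]

theorem concatT_le_concatT {p q : ℕ} (h : p + q = n) (c : MChain L p) (c' : MChain L q)
    (x y : Fin n) (hxy : x ≤ y) (hb : (x : ℕ) < p ↔ (y : ℕ) < p) :
    concatT L h c.1 c'.1 y ≤ concatT L h c.1 c'.1 x := by
  unfold concatT
  by_cases hx : (x : ℕ) < p
  · rw [dif_pos hx, dif_pos (hb.1 hx)]
    exact c.2 hxy
  · rw [dif_neg hx, dif_neg (hb.not.1 hx)]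
    exact c'.2 (Nat.sub_le_sub_right hxy p)

theorem concatT_comp_succAbove_left {p q : ℕ} (h : p + 1 + q = n + 1) (h' : p + q = n)
    (i : Fin (p + 1)) (c : MChain L (p + 1)) (c' : MChain L q) :
    concatT L h c.1 c'.1 ∘ Fin.succAbove ⟨i, by omega⟩ =
      concatT L h' (mdel L i c).1 c'.1 := by
  funext x
  by_cases hx : (x : ℕ) < p <;>
    simp only [concatT, mdel, Function.comp_apply, val_succAbove, hx, dite_true, dite_false] <;>
    split_ifs <;> first
    | omega
    | (refine congrArg _ (Fin.ext ?_); simp only [val_succAbove]; split_ifs <;> omega)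
    | (refine congrArg _ (Fin.ext ?_); dsimp only; omega)

theorem concatT_comp_succAbove_right {p q : ℕ} (h : p + (q + 1) = n + 1) (h' : p + q = n)
    (i : Fin (q + 1)) (c : MChain L p) (c' : MChain L (q + 1)) :
    concatT L h c.1 c'.1 ∘ Fin.succAbove ⟨p + i, by omega⟩ =
      concatT L h' c.1 (mdel L i c').1 := by
  funext x
  by_cases hx : (x : ℕ) < p <;>
    simp only [concatT, mdel, Function.comp_apply, val_succAbove, hx, dite_true, dite_false] <;>
    split_ifs <;> first
    | omega
    | rfl
    | (refine congrArg _ (Fin.ext ?_); simp only [val_succAbove]; split_ifs <;> omega)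

theorem sum_fin_eq_add {M : Type*} [AddCommMonoid M] {p q : ℕ} (h : p + q = n) (f : Fin n → M) :
    ∑ m, f m = ∑ i : Fin p, f ⟨i, by omega⟩ + ∑ j : Fin q, f ⟨p + j, by omega⟩ := by
  subst h
  exact Fin.sum_univ_add f

theorem shuffleTotal_lof_single {p q : ℕ} (h : p + q = n) (c : MChain L p) (c' : MChain L q) :
    shuffleTotal K L n (DirectSum.lof K (DIdx n)
        (fun pq => MGrp K L pq.1.1 ⊗[K] MGrp K L pq.1.2) ⟨(p, q), h⟩
        (Finsupp.single c 1 ⊗ₜ[K] Finsupp.single c' 1)) =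
      shuffleSum K p (concatT L h c.1 c'.1) := by
  rw [shuffleTotal, DirectSum.toModule_lof]
  simp [shufLin, castMGrp_shufPair]

theorem shuffleTotal_deltaLeft {p q : ℕ} (h : p + q = n + 1) (c : MChain L p)
    (c' : MChain L q) :
    shuffleTotal K L n (deltaLeft K L n ⟨(p, q), h⟩
        (Finsupp.single c 1 ⊗ₜ[K] Finsupp.single c' 1)) =
      ∑ i : Fin p, (-1 : K) ^ (i : ℕ) • shuffleSum K (blockSize p i)
        (concatT L h c.1 c'.1 ∘ Fin.succAbove ⟨i, by omega⟩) := by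
  cases p with
  | zero => simp [deltaLeft]
  | succ p =>
    simp only [deltaLeft, LinearMap.comp_apply, TensorProduct.map_tmul, mbdry_single,
      LinearMap.id_apply, TensorProduct.sum_tmul, map_sum]
    refine Finset.sum_congr rfl fun i _ => ?_
    rw [← TensorProduct.smul_tmul', map_smul, map_smul, shuffleTotal_lof_single,
      concatT_comp_succAbove_left h (by omega), blockSize, if_pos i.2, Nat.add_sub_cancel]

theorem shuffleTotal_deltaRight {p q : ℕ} (h : p + q = n + 1) (c : MChain L p)
    (c' : MChain L q) :
    shuffleTotal K L n (deltaRight K L n ⟨(p, q), h⟩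
        (Finsupp.single c 1 ⊗ₜ[K] Finsupp.single c' 1)) =
      ∑ i : Fin q, (-1 : K) ^ (p + i : ℕ) • shuffleSum K (blockSize p (p + i))
        (concatT L h c.1 c'.1 ∘ Fin.succAbove ⟨p + i, by omega⟩) := by
  cases q with
  | zero => simp [deltaRight]
  | succ q =>
    simp only [deltaRight, LinearMap.smul_apply, LinearMap.comp_apply, TensorProduct.map_tmul,
      mbdry_single, LinearMap.id_apply, TensorProduct.tmul_sum, TensorProduct.tmul_smul, map_sum,
      map_smul, Finset.smul_sum]
    refine Finset.sum_congr rfl fun i _ => ?_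
    rw [shuffleTotal_lof_single, concatT_comp_succAbove_right h (by omega), pow_add, smul_smul]
    simp [blockSize]

end Boundary

/-- **the shuffle product is a chain map.**  For every `n ≥ 0` and every
`α ∈ D_n(L)` (i.e. `α ∈ Dmod K L (n+1)` in entry-count grading),
`∂_n(⧢(α)) = ⧢(δ_n(α))`. -/
theorem shuffle_chain_map [Fintype L] (n : ℕ) (α : Dmod K L (n + 1)) :
    mbdry K L n (shuffleTotal K L (n + 1) α) = shuffleTotal K L n (deltaD K L n α) := by
  suffices h : (mbdry K L n).comp (shuffleTotal K L (n + 1)) =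
      (shuffleTotal K L n).comp (deltaD K L n) from LinearMap.congr_fun h α
  refine DirectSum.linearMap_ext K fun pq => ?_
  obtain ⟨⟨p, q⟩, h⟩ := pq
  refine TensorProduct.ext (Finsupp.lhom_ext' fun c => LinearMap.ext_ring
    (Finsupp.lhom_ext' fun c' => LinearMap.ext_ring ?_))
  change mbdry K L n (shuffleTotal K L (n + 1) (DirectSum.lof K (DIdx (n + 1))
      (fun pq => MGrp K L pq.1.1 ⊗[K] MGrp K L pq.1.2) ⟨(p, q), h⟩
      (Finsupp.single c 1 ⊗ₜ[K] Finsupp.single c' 1))) =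
    shuffleTotal K L n (deltaD K L n (DirectSum.lof K (DIdx (n + 1))
      (fun pq => MGrp K L pq.1.1 ⊗[K] MGrp K L pq.1.2) ⟨(p, q), h⟩
      (Finsupp.single c 1 ⊗ₜ[K] Finsupp.single c' 1)))
  rw [shuffleTotal_lof_single, mbdry_shuffleSum K p _ (concatT_le_concatT h c c'), deltaD,
    DirectSum.toModule_lof, LinearMap.add_apply, map_add, shuffleTotal_deltaLeft,
    shuffleTotal_deltaRight, sum_fin_eq_add h]

end
end

section
/- For every finite poset P there exists a synor complex for P, i.e. a strictly P-graded complex (S_*(P), δ_*) together with an injective P-graded chain map φ : (S_*(P), δ_*) → (C̃_*(P), ∂_*) satisfying (S1) and (S2). -/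
open Finsupp

noncomputable section

variable (K : Type) [Field K]

section Core
variable (P : Type) [Preorder P]

/-- Order chains with `n` elements of the poset `P`, written as strictly
decreasing tuples `(x₀ > x₁ > ⋯ > x_{n-1})`. -/
def OChain (n : ℕ) : Type := {c : Fin n → P // StrictAnti c}

/-- The chain group in "level" `n`: the `K`-vector space with basis the order chains with
`n` elements.  Level `n` corresponds to homological degree `n - 1`; in particular
`CGrp K P 0 ≅ K` is the reduced part `C̃₋₁`. -/
abbrev CGrp (n : ℕ) : Type := OChain P n →₀ K

/-- Deletion of the `k`-th entry of an order chain. -/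
def odel {n : ℕ} (k : Fin (n + 1)) (c : OChain P (n + 1)) : OChain P n :=
  ⟨c.1 ∘ k.succAbove, c.2.comp_strictMono (Fin.strictMono_succAbove k)⟩

/-- The simplicial boundary map (of the reduced simplicial chain complex of the order
complex), from level `n+1` to level `n`. -/
def cbdry (n : ℕ) : CGrp K P (n + 1) →ₗ[K] CGrp K P n :=
  Finsupp.lsum K fun c => ∑ k : Fin (n + 1), ((-1 : K) ^ (k : ℕ)) • Finsupp.lsingle (odel P k c)

/-- The cycles in level `n` (every level-0 chain, i.e. multiple of the empty chain,
is a cycle). -/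
def cyclesAt : (n : ℕ) → Submodule K (CGrp K P n)
  | 0 => ⊤
  | (n + 1) => LinearMap.ker (cbdry K P n)

/-- The boundaries in level `n`. -/
def boundariesIn (n : ℕ) : Submodule K (CGrp K P n) :=
  LinearMap.range (cbdry K P n)

/-- `H̃_{n-1}(P) ≠ 0`: nontriviality of the reduced simplicial homology (with coefficients
in `K`) of the order complex of `P` in degree `n - 1` (level `n`). -/
def RHomNontrivial (n : ℕ) : Prop := ¬ cyclesAt K P n ≤ boundariesIn K P n

/-- The subspace of chains all of whose elements lie in the subset `J ⊆ P`
(the chain group of the subposet `J`). -/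
def chainsIn (J : Set P) (n : ℕ) : Submodule K (CGrp K P n) :=
  Finsupp.supported K K {c : OChain P n | ∀ r, c.1 r ∈ J}

/-- Transport of chain groups along an equality of levels. -/
def castCGrp {a b : ℕ} (h : a = b) : CGrp K P a ≃ₗ[K] CGrp K P b :=
  Finsupp.domLCongr (Equiv.cast (congrArg (OChain P) h))

end Core


section Synor
variable (P : Type) [PartialOrder P]

/-- For a family `S` of graded pieces (with `S n x` the piece of homological degree `n`,
i.e. level `n+1`, sitting over `x ∈ P`) and a subset `J ⊆ P`, the part of the complex
lying over `J`: at level `0` it is all of `C̃₋₁ = K`, and at level `n+1` it is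
`⊕_{x ∈ J} S_n^{(x)}`. -/
def idealPart (S : (n : ℕ) → P → Submodule K (CGrp K P (n + 1))) (J : Set P) :
    (nn : ℕ) → Submodule K (CGrp K P nn)
  | 0 => ⊤
  | (n + 1) => ⨆ x ∈ J, S n x

/-- A synor complex for the finite poset `P`: a strictly `P`-graded subcomplex
`S_*(P) ⊆ C̃_*(P)` of the reduced simplicial chain complex of the order complex of `P`
(we identify the injective `P`-graded chain map `φ` with the inclusion of its image) with:
`S_i(P) = ⊕_{x ∈ P} S_i(P)^{(x)}` with `S_i(P)^{(x)}` contained in the span of the order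
chains with largest element `x` (`graded`); `∂(S_i(P)^{(x)}) ⊆ ⊕_{y<x} S_{i-1}(P)^{(y)}`
(`strict`; for degree `0` the boundary lands in `C̃₋₁ = K` automatically); (S1)
`dim_K S_i(P)^{(x)} = dim_K H̃_{i-1}(P_{<x})` (`dim_eq`, the dimension of the reduced
homology being the dimension of the cycles minus the dimension of the boundaries); and
(S2) for every order ideal `J ⊆ P` the inclusion `S_*(P)^J ⊆ C̃_*(J)` induces an
isomorphism on homology (`quasiIso`: surjectivity and injectivity of the induced map). -/
structure SynorComplex : Type where
  S : (n : ℕ) → P → Submodule K (CGrp K P (n + 1))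
  graded : ∀ (n : ℕ) (x : P),
    S n x ≤ Finsupp.supported K K {c : OChain P (n + 1) | c.1 0 = x}
  strict : ∀ (n : ℕ) (x : P), ∀ f ∈ S (n + 1) x,
    cbdry K P (n + 1) f ∈ ⨆ y ∈ Set.Iio x, S n y
  dim_eq : ∀ (n : ℕ) (x : P),
    Module.finrank K ↥(S n x) =
      Module.finrank K ↥(cyclesAt K {y : P // y < x} n) -
        Module.finrank K ↥(boundariesIn K {y : P // y < x} n)
  quasiIso : ∀ J : Set P, IsLowerSet J → ∀ nn : ℕ,
    (∀ z ∈ cyclesAt K P nn ⊓ chainsIn K P J nn,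
        ∃ a ∈ cyclesAt K P nn ⊓ idealPart K P S J nn,
          z - a ∈ Submodule.map (cbdry K P nn) (chainsIn K P J (nn + 1))) ∧
    (∀ a ∈ idealPart K P S J nn,
        a ∈ Submodule.map (cbdry K P nn) (chainsIn K P J (nn + 1)) →
        a ∈ Submodule.map (cbdry K P nn) (idealPart K P S J (nn + 1)))

end Synor

section OrderCone
variable (P : Type) [Preorder P]

/-- An order chain of `P_{<x}`, viewed as an order chain of `P`. -/
def OChain.incl (x : P) {n : ℕ} (c : OChain {y : P // y < x} n) : OChain P n :=
  ⟨fun i => (c.1 i : P), fun _ _ h => c.2 h⟩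

/-- The order chain of `P` obtained from an order chain of `P_{<x}` by adding `x` on top. -/
def OChain.cone (x : P) {n : ℕ} (c : OChain {y : P // y < x} n) : OChain P (n + 1) :=
  ⟨Fin.cons x fun i => (c.1 i : P), by
    intro i j h
    induction j using Fin.cases with
    | zero => exact absurd h (Fin.not_lt_zero i)
    | succ j =>
      induction i using Fin.cases with
      | zero => simpa using (c.1 j).2
      | succ i => simpa using c.2 (Fin.succ_lt_succ_iff.mp h)⟩

variable {P}

theorem OChain.incl_injective (x : P) (n : ℕ) :
    Function.Injective (OChain.incl P x (n := n)) := by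
  intro c d h
  refine Subtype.ext (funext fun i => Subtype.ext ?_)
  exact congrFun (congrArg Subtype.val h) i

theorem OChain.cone_injective (x : P) (n : ℕ) :
    Function.Injective (OChain.cone P x (n := n)) := by
  intro c d h
  refine Subtype.ext (funext fun i => Subtype.ext ?_)
  simpa [OChain.cone] using congrFun (congrArg Subtype.val h) i.succ

theorem OChain.exists_incl_eq {x : P} {n : ℕ} (c : OChain P n) (hc : ∀ r, c.1 r < x) :
    ∃ q, OChain.incl P x q = c :=
  ⟨⟨fun i => ⟨c.1 i, hc i⟩, fun _ _ h => c.2 h⟩, rfl⟩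

theorem OChain.exists_cone_eq {n : ℕ} (c : OChain P (n + 1)) :
    ∃ q, OChain.cone P (c.1 0) q = c := by
  refine ⟨⟨fun i => ⟨c.1 i.succ, c.2 i.succ_pos⟩,
    fun _ _ h => c.2 (Fin.succ_lt_succ_iff.mpr h)⟩, ?_⟩
  refine Subtype.ext (funext fun i => ?_)
  induction i using Fin.cases <;> rfl

theorem odel_zero_cone (x : P) {n : ℕ} (c : OChain {y : P // y < x} n) :
    odel P 0 (OChain.cone P x c) = OChain.incl P x c := by
  refine Subtype.ext (funext fun i => ?_)
  simp [odel, OChain.cone, OChain.incl]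

theorem odel_succ_cone (x : P) {n : ℕ} (k : Fin (n + 1)) (c : OChain {y : P // y < x} (n + 1)) :
    odel P k.succ (OChain.cone P x c) = OChain.cone P x (odel _ k c) := by
  refine Subtype.ext (funext fun i => ?_)
  induction i using Fin.cases <;> simp [odel, OChain.cone, Fin.removeNth]

variable (P)

/-- The inclusion of the chain groups of `P_{<x}` into those of `P`. -/
def inclMap (x : P) (n : ℕ) : CGrp K {y : P // y < x} n →ₗ[K] CGrp K P n :=
  Finsupp.lmapDomain K K (OChain.incl P x)

/-- The cone operator, adding `x` on top of the chains of `P_{<x}`. -/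
def coneMap (x : P) (n : ℕ) : CGrp K {y : P // y < x} n →ₗ[K] CGrp K P (n + 1) :=
  Finsupp.lmapDomain K K (OChain.cone P x)

variable {P}

theorem inclMap_injective (x : P) (n : ℕ) : Function.Injective (inclMap K P x n) :=
  Finsupp.mapDomain_injective (OChain.incl_injective x n)

theorem coneMap_injective (x : P) (n : ℕ) : Function.Injective (coneMap K P x n) :=
  Finsupp.mapDomain_injective (OChain.cone_injective x n)

theorem cbdry_single {n : ℕ} (c : OChain P (n + 1)) (a : K) :
    cbdry K P n (single c a) =
      ∑ k : Fin (n + 1), ((-1 : K) ^ (k : ℕ)) • single (odel P k c) a := by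
  simp [cbdry]

theorem inclMap_cbdry (x : P) (n : ℕ) (f : CGrp K {y : P // y < x} (n + 1)) :
    inclMap K P x n (cbdry K _ n f) = cbdry K P n (inclMap K P x (n + 1) f) := by
  induction f using Finsupp.induction_linear with
  | zero => simp
  | add f g hf hg => simp only [map_add, hf, hg]
  | single c a =>
    simp only [inclMap, cbdry_single, map_sum, map_smul, lmapDomain_apply, mapDomain_single]
    rfl

theorem cbdry_coneMap_zero (x : P) (f : CGrp K {y : P // y < x} 0) :
    cbdry K P 0 (coneMap K P x 0 f) = inclMap K P x 0 f := by
  induction f using Finsupp.induction_linear with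
  | zero => simp
  | add f g hf hg => simp only [map_add, hf, hg]
  | single c a =>
    simp [inclMap, coneMap, cbdry_single, odel_zero_cone]

theorem cbdry_coneMap_succ (x : P) (n : ℕ) (f : CGrp K {y : P // y < x} (n + 1)) :
    cbdry K P (n + 1) (coneMap K P x (n + 1) f) =
      inclMap K P x (n + 1) f - coneMap K P x n (cbdry K _ n f) := by
  induction f using Finsupp.induction_linear with
  | zero => simp
  | add f g hf hg => simp only [map_add, hf, hg]; abel
  | single c a =>
    simp only [inclMap, coneMap, cbdry_single, lmapDomain_apply, mapDomain_single, map_sum,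
      map_smul]
    rw [Fin.sum_univ_succ]
    simp [odel_zero_cone, odel_succ_cone, pow_succ, sub_eq_add_neg]

theorem cbdry_cbdry (n : ℕ) : ∀ (P : Type) [Preorder P] (f : CGrp K P (n + 2)),
    cbdry K P n (cbdry K P (n + 1) f) = 0 := by
  induction n with
  | zero =>
    intro P _ f
    induction f using Finsupp.induction_linear with
    | zero => simp
    | add f g hf hg => simp only [map_add, hf, hg, add_zero]
    | single c a =>
      obtain ⟨q, hq⟩ := OChain.exists_cone_eq c
      have h : single c a = coneMap K P (c.1 0) 1 (single q a) := by
        simp [coneMap, hq]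
      rw [h, cbdry_coneMap_succ, map_sub, cbdry_coneMap_zero, inclMap_cbdry, sub_self]
  | succ n ih =>
    intro P _ f
    induction f using Finsupp.induction_linear with
    | zero => simp
    | add f g hf hg => simp only [map_add, hf, hg, add_zero]
    | single c a =>
      obtain ⟨q, hq⟩ := OChain.exists_cone_eq c
      have h : single c a = coneMap K P (c.1 0) (n + 2) (single q a) := by
        simp [coneMap, hq]
      rw [h, cbdry_coneMap_succ, map_sub, cbdry_coneMap_succ, inclMap_cbdry, ih, map_zero,
        sub_zero, sub_self]

theorem cbdry_mem_cyclesAt {n : ℕ} (f : CGrp K P (n + 1)) : cbdry K P n f ∈ cyclesAt K P n := by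
  cases n with
  | zero => exact Submodule.mem_top
  | succ n => exact cbdry_cbdry K n P f

theorem cbdry_coneMap_of_mem_cyclesAt (x : P) {n : ℕ} {f : CGrp K {y : P // y < x} n}
    (hf : f ∈ cyclesAt K _ n) : cbdry K P n (coneMap K P x n f) = inclMap K P x n f := by
  cases n with
  | zero => exact cbdry_coneMap_zero K x f
  | succ n =>
    have hf' : cbdry K _ n f = 0 := hf
    rw [cbdry_coneMap_succ, hf', map_zero, sub_zero]

theorem inclMap_mem_cyclesAt (x : P) {n : ℕ} {f : CGrp K {y : P // y < x} n}
    (hf : f ∈ cyclesAt K _ n) : inclMap K P x n f ∈ cyclesAt K P n := by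
  rw [← cbdry_coneMap_of_mem_cyclesAt K x hf]
  exact cbdry_mem_cyclesAt K _

theorem inclMap_mem_chainsIn (x : P) {n : ℕ} (f : CGrp K {y : P // y < x} n) :
    inclMap K P x n f ∈ chainsIn K P (Set.Iio x) n := by
  induction f using Finsupp.induction_linear with
  | zero => simp
  | add f g hf hg => rw [map_add]; exact add_mem hf hg
  | single c a =>
    simp only [inclMap, lmapDomain_apply, mapDomain_single]
    exact Finsupp.single_mem_supported K a fun r => (c.1 r).2

theorem chainsIn_Iio_le_range (x : P) (n : ℕ) :
    chainsIn K P (Set.Iio x) n ≤ LinearMap.range (inclMap K P x n) := by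
  rw [chainsIn, Finsupp.supported_eq_span_single, Submodule.span_le]
  rintro _ ⟨c, hc, rfl⟩
  obtain ⟨q, rfl⟩ := OChain.exists_incl_eq c hc
  exact ⟨single q 1, by simp [inclMap]⟩

theorem coneMap_mem_supported (x : P) {n : ℕ} (f : CGrp K {y : P // y < x} n) :
    coneMap K P x n f ∈ Finsupp.supported K K {c : OChain P (n + 1) | c.1 0 = x} := by
  induction f using Finsupp.induction_linear with
  | zero => simp
  | add f g hf hg => rw [map_add]; exact add_mem hf hg
  | single c a =>
    simp only [coneMap, lmapDomain_apply, mapDomain_single]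
    exact Finsupp.single_mem_supported K a rfl

theorem coneMap_mem_chainsIn {J : Set P} (hJ : IsLowerSet J) {x : P} (hx : x ∈ J) {n : ℕ}
    (f : CGrp K {y : P // y < x} n) : coneMap K P x n f ∈ chainsIn K P J (n + 1) := by
  induction f using Finsupp.induction_linear with
  | zero => simp
  | add f g hf hg => rw [map_add]; exact add_mem hf hg
  | single c a =>
    simp only [coneMap, lmapDomain_apply, mapDomain_single]
    refine Finsupp.single_mem_supported K a fun r => ?_
    induction r using Fin.cases with
    | zero => exact hx
    | succ r => exact hJ (c.1 r).2.le hx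

theorem chainsIn_mono {J J' : Set P} (h : J ⊆ J') (n : ℕ) :
    chainsIn K P J n ≤ chainsIn K P J' n :=
  Finsupp.supported_mono fun _ hc r => h (hc r)

theorem cbdry_mem_chainsIn {J : Set P} {n : ℕ} {f : CGrp K P (n + 1)}
    (hf : f ∈ chainsIn K P J (n + 1)) : cbdry K P n f ∈ chainsIn K P J n := by
  suffices h : chainsIn K P J (n + 1) ≤ (chainsIn K P J n).comap (cbdry K P n) from h hf
  rw [chainsIn, Finsupp.supported_eq_span_single, Submodule.span_le]
  rintro _ ⟨c, hc, rfl⟩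
  simp only [SetLike.mem_coe, Submodule.mem_comap, cbdry_single]
  exact Submodule.sum_mem _ fun k _ => Submodule.smul_mem _ _ <|
    Finsupp.single_mem_supported K _ fun r => hc _

/-- A cone over `x` that only involves chains avoiding `x` vanishes. -/
theorem eq_zero_of_coneMap_mem_chainsIn {J : Set P} {x : P} (hx : x ∉ J) {n : ℕ}
    {f : CGrp K {y : P // y < x} n} (hf : coneMap K P x n f ∈ chainsIn K P J (n + 1)) :
    f = 0 := by
  ext q
  have h : coneMap K P x n f (OChain.cone P x q) = f q :=
    Finsupp.mapDomain_apply (OChain.cone_injective x n) f q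
  rw [← h]
  exact (Finsupp.mem_supported' K _).mp hf _ fun hq => hx (hq 0)

theorem chainsIn_zero (J : Set P) : chainsIn K P J 0 = ⊤ := by
  have h : {c : OChain P 0 | ∀ r, c.1 r ∈ J} = Set.univ :=
    Set.eq_univ_of_forall fun _ r => r.elim0
  rw [chainsIn, h, Finsupp.supported_univ]

theorem chainsIn_empty_succ (n : ℕ) : chainsIn K P ∅ (n + 1) = ⊥ := by
  have h : {c : OChain P (n + 1) | ∀ r, c.1 r ∈ (∅ : Set P)} = ∅ :=
    Set.eq_empty_of_forall_notMem fun _ hc => hc 0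
  rw [chainsIn, h, Finsupp.supported_empty]

instance [Finite P] (n : ℕ) : Finite (OChain P n) :=
  inferInstanceAs (Finite {c : Fin n → P // StrictAnti c})

end OrderCone

section RelativeComplement
variable {V : Type} [AddCommGroup V] [Module K V]

/-- A complement of `B ⊓ A` inside `A`. -/
def relCompl (B A : Submodule K V) : Submodule K V :=
  (exists_isCompl (B ⊓ A)).choose ⊓ A

theorem relCompl_le (B A : Submodule K V) : relCompl K B A ≤ A := inf_le_right

theorem disjoint_relCompl (B A : Submodule K V) : Disjoint (relCompl K B A) B := by
  have h := (exists_isCompl (B ⊓ A)).choose_spec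
  rw [_root_.disjoint_iff, relCompl, inf_assoc, inf_comm A B, inf_comm]
  exact h.inf_eq_bot

theorem relCompl_sup (B A : Submodule K V) : relCompl K B A ⊔ B ⊓ A = A := by
  have h := (exists_isCompl (B ⊓ A)).choose_spec
  rw [relCompl, sup_comm, ← sup_inf_assoc_of_le _ (inf_le_right : B ⊓ A ≤ A), h.sup_eq_top,
    top_inf_eq]

end RelativeComplement

section Construction
variable (P : Type) [PartialOrder P]

/-- The graded pieces of the synor complex: cones over representatives of the homology
of `P_{<x}` by cycles of the part already constructed. -/
def synorPiece : (n : ℕ) → P → Submodule K (CGrp K P (n + 1))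
  | 0, x => (relCompl K (boundariesIn K {y : P // y < x} 0)
      (cyclesAt K {y : P // y < x} 0 ⊓ Submodule.comap (inclMap K P x 0) ⊤)).map
        (coneMap K P x 0)
  | (n + 1), x => (relCompl K (boundariesIn K {y : P // y < x} (n + 1))
      (cyclesAt K {y : P // y < x} (n + 1) ⊓
        Submodule.comap (inclMap K P x (n + 1)) (⨆ y ∈ Set.Iio x, synorPiece n y))).map
        (coneMap K P x (n + 1))

/-- The chosen space of cycles of `P_{<x}` representing its homology. -/
def synorCycles (n : ℕ) (x : P) : Submodule K (CGrp K {y : P // y < x} n) :=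
  relCompl K (boundariesIn K {y : P // y < x} n) (cyclesAt K {y : P // y < x} n ⊓
    Submodule.comap (inclMap K P x n) (idealPart K P (synorPiece K P) (Set.Iio x) n))

variable {P}

theorem synorPiece_eq (n : ℕ) (x : P) :
    synorPiece K P n x = (synorCycles K P n x).map (coneMap K P x n) := by
  cases n <;> rfl

theorem synorCycles_le_cyclesAt (n : ℕ) (x : P) :
    synorCycles K P n x ≤ cyclesAt K {y : P // y < x} n :=
  (relCompl_le K _ _).trans inf_le_left

theorem inclMap_mem_idealPart {n : ℕ} {x : P} {t : CGrp K {y : P // y < x} n}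
    (ht : t ∈ synorCycles K P n x) :
    inclMap K P x n t ∈ idealPart K P (synorPiece K P) (Set.Iio x) n :=
  ((relCompl_le K _ _).trans inf_le_right : synorCycles K P n x ≤ _) ht

theorem idealPart_mono (S : (n : ℕ) → P → Submodule K (CGrp K P (n + 1))) {J J' : Set P}
    (h : J ⊆ J') (n : ℕ) : idealPart K P S J n ≤ idealPart K P S J' n := by
  cases n with
  | zero => exact le_rfl
  | succ n => exact biSup_mono h

theorem idealPart_synorPiece_le_chainsIn {J : Set P} (hJ : IsLowerSet J) (n : ℕ) :
    idealPart K P (synorPiece K P) J n ≤ chainsIn K P J n := by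
  cases n with
  | zero => rw [chainsIn_zero]; exact le_top
  | succ n =>
    refine iSup₂_le fun x hx => ?_
    rw [synorPiece_eq]
    rintro _ ⟨t, -, rfl⟩
    exact coneMap_mem_chainsIn K hJ hx t

theorem coneMap_mem_idealPart {J : Set P} {n : ℕ} {x : P} (hx : x ∈ J)
    {t : CGrp K {y : P // y < x} n} (ht : t ∈ synorCycles K P n x) :
    coneMap K P x n t ∈ idealPart K P (synorPiece K P) J (n + 1) := by
  have h : synorPiece K P n x ≤ idealPart K P (synorPiece K P) J (n + 1) :=
    le_iSup₂_of_le x hx le_rfl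
  apply h
  rw [synorPiece_eq]
  exact Submodule.mem_map_of_mem ht

theorem exists_eq_add_coneMap_of_mem_chainsIn {J : Set P} {x : P} (hx : Maximal (· ∈ J) x)
    {n : ℕ} {f : CGrp K P (n + 1)} (hf : f ∈ chainsIn K P J (n + 1)) :
    ∃ g ∈ chainsIn K P (J \ {x}) (n + 1), ∃ c, f = g + coneMap K P x n c := by
  suffices h : chainsIn K P J (n + 1) ≤
      chainsIn K P (J \ {x}) (n + 1) ⊔ LinearMap.range (coneMap K P x n) by
    obtain ⟨g, hg, _, ⟨c, rfl⟩, rfl⟩ := Submodule.mem_sup.mp (h hf)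
    exact ⟨g, hg, c, rfl⟩
  rw [chainsIn, Finsupp.supported_eq_span_single, Submodule.span_le]
  rintro _ ⟨c, hc, rfl⟩
  by_cases h : c.1 0 = x
  · subst h
    obtain ⟨q, hq⟩ := OChain.exists_cone_eq c
    exact Submodule.mem_sup_right ⟨single q 1, by simp [coneMap, hq]⟩
  · refine Submodule.mem_sup_left (Finsupp.single_mem_supported K 1 fun r => ⟨hc r, ?_⟩)
    rintro rfl
    exact h (hx.eq_of_ge (hc 0) (c.2.antitone (Fin.zero_le r)))

theorem exists_eq_add_coneMap_of_mem_idealPart {J : Set P} {x : P} (hx : x ∈ J)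
    {n : ℕ} {a : CGrp K P (n + 1)} (ha : a ∈ idealPart K P (synorPiece K P) J (n + 1)) :
    ∃ b ∈ idealPart K P (synorPiece K P) (J \ {x}) (n + 1), ∃ t ∈ synorCycles K P n x,
      a = b + coneMap K P x n t := by
  have h : idealPart K P (synorPiece K P) J (n + 1) ≤
      idealPart K P (synorPiece K P) (J \ {x}) (n + 1) ⊔
        (synorCycles K P n x).map (coneMap K P x n) := by
    refine iSup₂_le fun y hy => ?_
    by_cases hyx : y = x
    · subst hyx
      rw [← synorPiece_eq]
      exact le_sup_right
    · exact le_sup_of_le_left (le_iSup₂_of_le y ⟨hy, hyx⟩ le_rfl)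
  obtain ⟨b, hb, _, ⟨t, ht, rfl⟩, rfl⟩ := Submodule.mem_sup.mp (h ha)
  exact ⟨b, hb, t, ht, rfl⟩

/-- The inclusion of the part of the synor complex over `J` into the chains of `J`
induces an isomorphism on homology. -/
def SynorQuasiIso (J : Set P) : Prop := ∀ nn : ℕ,
    (∀ z ∈ cyclesAt K P nn ⊓ chainsIn K P J nn,
        ∃ a ∈ cyclesAt K P nn ⊓ idealPart K P (synorPiece K P) J nn,
          z - a ∈ Submodule.map (cbdry K P nn) (chainsIn K P J (nn + 1))) ∧
    (∀ a ∈ idealPart K P (synorPiece K P) J nn,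
        a ∈ Submodule.map (cbdry K P nn) (chainsIn K P J (nn + 1)) →
        a ∈ Submodule.map (cbdry K P nn) (idealPart K P (synorPiece K P) J (nn + 1)))

variable {K}

/-- If the synor complex computes the homology of `P_{<x}`, the chosen cycles represent it. -/
theorem SynorQuasiIso.exists_eq_add_cbdry {x : P} (h : SynorQuasiIso K (Set.Iio x)) {n : ℕ}
    {c : CGrp K {y : P // y < x} n} (hc : c ∈ cyclesAt K {y : P // y < x} n) :
    ∃ t ∈ synorCycles K P n x, ∃ d, c = t + cbdry K {y : P // y < x} n d := by
  obtain ⟨a, ⟨-, ha⟩, e, he, hea⟩ :=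
    (h n).1 _ ⟨inclMap_mem_cyclesAt K x hc, inclMap_mem_chainsIn K x c⟩
  obtain ⟨e, rfl⟩ := chainsIn_Iio_le_range K x _ he
  have haeq : inclMap K P x n (c - cbdry K _ n e) = a := by
    rw [map_sub, inclMap_cbdry, hea, sub_sub_cancel]
  have hmem : c - cbdry K _ n e ∈ cyclesAt K {y : P // y < x} n ⊓
      Submodule.comap (inclMap K P x n) (idealPart K P (synorPiece K P) (Set.Iio x) n) :=
    ⟨sub_mem hc (cbdry_mem_cyclesAt K e), by rw [← haeq] at ha; exact ha⟩
  rw [← relCompl_sup K (boundariesIn K {y : P // y < x} n) (_ ⊓ _)] at hmem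
  obtain ⟨t, ht, _, ⟨⟨d, rfl⟩, -⟩, htd⟩ := Submodule.mem_sup.mp hmem
  refine ⟨t, ht, d + e, ?_⟩
  rw [map_add, ← add_assoc, htd, sub_add_cancel]

theorem SynorQuasiIso.empty : SynorQuasiIso K (∅ : Set P) := by
  intro n
  cases n with
  | zero =>
    refine ⟨fun z hz => ⟨z, ⟨hz.1, Submodule.mem_top⟩, by simp⟩, fun a _ ha => ?_⟩
    rw [chainsIn_empty_succ, Submodule.map_bot, Submodule.mem_bot] at ha
    rw [ha]
    exact zero_mem _
  | succ n =>
    refine ⟨fun z hz => ⟨0, zero_mem _, ?_⟩, fun a _ ha => ?_⟩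
    · have hz' : z ∈ chainsIn K P ∅ (n + 1) := hz.2
      rw [chainsIn_empty_succ, Submodule.mem_bot] at hz'
      rw [hz', sub_zero]
      exact zero_mem _
    · rw [chainsIn_empty_succ, Submodule.map_bot, Submodule.mem_bot] at ha
      rw [ha]
      exact zero_mem _

/-- Replacing the cone over a cycle by the cone over its chosen representative. -/
theorem coneMap_add_cbdry {x : P} {n : ℕ} (t : CGrp K {y : P // y < x} n)
    (d : CGrp K {y : P // y < x} (n + 1)) :
    coneMap K P x n (t + cbdry K _ n d) =
      coneMap K P x n t + inclMap K P x (n + 1) d -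
        cbdry K P (n + 1) (coneMap K P x (n + 1) d) := by
  rw [cbdry_coneMap_succ, map_add]
  abel

section Step
variable {J : Set P} {x : P}

theorem isLowerSet_sdiff_of_maximal (hJ : IsLowerSet J) (hx : Maximal (· ∈ J) x) :
    IsLowerSet (J \ {x}) := by
  intro y w hwy hy
  refine ⟨hJ hwy hy.1, ?_⟩
  rintro rfl
  exact hy.2 (hx.eq_of_ge hy.1 hwy)

theorem SynorQuasiIso.exists_cycle (hJ : IsLowerSet J) (hx : Maximal (· ∈ J) x)
    (hIio : SynorQuasiIso K (Set.Iio x)) (hdiff : SynorQuasiIso K (J \ {x})) {n : ℕ}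
    {z : CGrp K P n} (hz : z ∈ cyclesAt K P n ⊓ chainsIn K P J n) :
    ∃ a ∈ cyclesAt K P n ⊓ idealPart K P (synorPiece K P) J n,
      z - a ∈ Submodule.map (cbdry K P n) (chainsIn K P J (n + 1)) := by
  have hsub : Set.Iio x ⊆ J \ {x} := fun y hy => ⟨hJ hy.le hx.1, hy.ne⟩
  cases n with
  | zero => exact ⟨z, ⟨hz.1, Submodule.mem_top⟩, by simp⟩
  | succ n =>
    obtain ⟨g, hg, c, rfl⟩ := exists_eq_add_coneMap_of_mem_chainsIn K hx hz.2
    have hbd : cbdry K P n (g + coneMap K P x n c) = 0 := hz.1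
    have hc : c ∈ cyclesAt K {y : P // y < x} n := by
      cases n with
      | zero => exact Submodule.mem_top
      | succ n =>
        rw [map_add, cbdry_coneMap_succ, ← add_sub_assoc, sub_eq_zero] at hbd
        apply eq_zero_of_coneMap_mem_chainsIn K (J := J \ {x}) (x := x) (by simp)
        rw [← hbd]
        exact add_mem (cbdry_mem_chainsIn K hg)
          (chainsIn_mono K hsub _ (inclMap_mem_chainsIn K x c))
    obtain ⟨t, ht, d, rfl⟩ := hIio.exists_eq_add_cbdry hc
    have htcone := cbdry_coneMap_of_mem_cyclesAt K x (synorCycles_le_cyclesAt K n x ht)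
    rw [coneMap_add_cbdry] at hbd ⊢
    have hg' : g + inclMap K P x (n + 1) d ∈ chainsIn K P (J \ {x}) (n + 1) :=
      add_mem hg (chainsIn_mono K hsub _ (inclMap_mem_chainsIn K x d))
    have hbd' : cbdry K P n (g + inclMap K P x (n + 1) d) = - inclMap K P x n t := by
      rw [map_add, map_sub, map_add, cbdry_cbdry, htcone] at hbd
      rw [map_add, eq_neg_iff_add_eq_zero, ← hbd]
      abel
    obtain ⟨s, hs, hst⟩ := (hdiff n).2 (inclMap K P x n t)
      (idealPart_mono K _ hsub n (inclMap_mem_idealPart K ht))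
      ⟨-(g + inclMap K P x (n + 1) d), neg_mem hg', by rw [map_neg, hbd', neg_neg]⟩
    have hlow := isLowerSet_sdiff_of_maximal hJ hx
    obtain ⟨a, ⟨hacyc, ha⟩, e, he, hea⟩ := (hdiff (n + 1)).1 (g + inclMap K P x (n + 1) d + s)
      ⟨show cbdry K P n _ = 0 by rw [map_add, hbd', hst, neg_add_cancel],
        add_mem hg' (idealPart_synorPiece_le_chainsIn K hlow _ hs)⟩
    have hacyc' : cbdry K P n a = 0 := hacyc
    refine ⟨a - s + coneMap K P x n t, ⟨?_, ?_⟩, e - coneMap K P x (n + 1) d, ?_, ?_⟩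
    · change cbdry K P n _ = 0
      rw [map_add, map_sub, hacyc', hst, htcone, zero_sub, neg_add_cancel]
    · exact add_mem (idealPart_mono K _ Set.sdiff_subset _ (sub_mem ha hs))
        (coneMap_mem_idealPart K hx.1 ht)
    · exact sub_mem (chainsIn_mono K Set.sdiff_subset _ he) (coneMap_mem_chainsIn K hJ hx.1 d)
    · rw [map_sub, hea]
      abel

theorem SynorQuasiIso.mem_map_cbdry (hJ : IsLowerSet J) (hx : Maximal (· ∈ J) x)
    (hIio : SynorQuasiIso K (Set.Iio x)) (hdiff : SynorQuasiIso K (J \ {x})) {n : ℕ}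
    {a : CGrp K P n} (ha : a ∈ idealPart K P (synorPiece K P) J n)
    (hab : a ∈ Submodule.map (cbdry K P n) (chainsIn K P J (n + 1))) :
    a ∈ Submodule.map (cbdry K P n) (idealPart K P (synorPiece K P) J (n + 1)) := by
  have hsub : Set.Iio x ⊆ J \ {x} := fun y hy => ⟨hJ hy.le hx.1, hy.ne⟩
  have hlow := isLowerSet_sdiff_of_maximal hJ hx
  obtain ⟨f, hf, hfa⟩ := hab
  obtain ⟨g, hg, c, rfl⟩ := exists_eq_add_coneMap_of_mem_chainsIn K hx hf
  have hkey : c ∈ cyclesAt K {y : P // y < x} n ∧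
      a ∈ idealPart K P (synorPiece K P) (J \ {x}) n := by
    cases n with
    | zero => exact ⟨Submodule.mem_top, Submodule.mem_top⟩
    | succ n =>
      obtain ⟨b, hb, t, ht, rfl⟩ := exists_eq_add_coneMap_of_mem_idealPart K hx.1 ha
      rw [map_add, cbdry_coneMap_succ] at hfa
      have hcone : coneMap K P x n (t + cbdry K _ n c) =
          cbdry K P (n + 1) g + inclMap K P x (n + 1) c - b := by
        rw [map_add, ← sub_eq_zero, ← sub_eq_zero.mpr hfa.symm]
        abel
      have hzero : t + cbdry K _ n c = 0 := by
        apply eq_zero_of_coneMap_mem_chainsIn K (J := J \ {x}) (x := x) (by simp)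
        rw [hcone]
        exact sub_mem (add_mem (cbdry_mem_chainsIn K hg)
          (chainsIn_mono K hsub _ (inclMap_mem_chainsIn K x c)))
          (idealPart_synorPiece_le_chainsIn K hlow _ hb)
      have ht0 : t = 0 := by
        refine Submodule.disjoint_def.mp (disjoint_relCompl K _ _) t ht ⟨-c, ?_⟩
        rw [map_neg, ← eq_neg_of_add_eq_zero_left hzero]
      refine ⟨?_, by simpa [ht0] using hb⟩
      change cbdry K _ n c = 0
      simpa [ht0] using hzero
  obtain ⟨hc, ha'⟩ := hkey
  obtain ⟨t, ht, d, rfl⟩ := hIio.exists_eq_add_cbdry hc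
  have htcone := cbdry_coneMap_of_mem_cyclesAt K x (synorCycles_le_cyclesAt K n x ht)
  rw [coneMap_add_cbdry, map_add, map_sub, cbdry_cbdry, sub_zero, map_add, htcone] at hfa
  obtain ⟨s, hs, hsa⟩ := (hdiff n).2 (a - inclMap K P x n t)
    (sub_mem ha' (idealPart_mono K _ hsub n (inclMap_mem_idealPart K ht)))
    ⟨g + inclMap K P x (n + 1) d,
      add_mem hg (chainsIn_mono K hsub _ (inclMap_mem_chainsIn K x d)), by
        rw [map_add, ← hfa]; abel⟩
  refine ⟨s + coneMap K P x n t, add_mem (idealPart_mono K _ Set.sdiff_subset _ hs)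
    (coneMap_mem_idealPart K hx.1 ht), ?_⟩
  rw [map_add, hsa, htcone, sub_add_cancel]

end Step

theorem synorQuasiIso_of_isLowerSet [Finite P] (J : Set P) (hJ : IsLowerSet J) :
    SynorQuasiIso K J := by
  induction J using WellFoundedLT.induction with
  | ind J ih =>
    rcases J.eq_empty_or_nonempty with rfl | hne
    · exact SynorQuasiIso.empty
    · obtain ⟨x, hx⟩ := J.toFinite.exists_maximal hne
      have hIio : SynorQuasiIso K (Set.Iio x) :=
        ih _ ⟨fun y hy => hJ (le_of_lt hy) hx.1, fun h => lt_irrefl x (h hx.1)⟩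
          (isLowerSet_Iio x)
      have hdiff : SynorQuasiIso K (J \ {x}) :=
        ih _ ⟨Set.sdiff_subset, fun h => (h hx.1).2 rfl⟩ (isLowerSet_sdiff_of_maximal hJ hx)
      exact fun n => ⟨fun _ hz => SynorQuasiIso.exists_cycle hJ hx hIio hdiff hz,
        fun _ ha hab => SynorQuasiIso.mem_map_cbdry hJ hx hIio hdiff ha hab⟩

theorem finrank_synorPiece [Finite P] (n : ℕ) (x : P) :
    Module.finrank K ↥(synorPiece K P n x) =
      Module.finrank K ↥(cyclesAt K {y : P // y < x} n) -
        Module.finrank K ↥(boundariesIn K {y : P // y < x} n) := by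
  have hsup : synorCycles K P n x ⊔ boundariesIn K {y : P // y < x} n =
      cyclesAt K {y : P // y < x} n := by
    apply le_antisymm
    · refine sup_le (synorCycles_le_cyclesAt K n x) ?_
      rintro _ ⟨f, rfl⟩
      exact cbdry_mem_cyclesAt K f
    · intro c hc
      obtain ⟨t, ht, d, rfl⟩ :=
        (synorQuasiIso_of_isLowerSet _ (isLowerSet_Iio x)).exists_eq_add_cbdry hc
      exact Submodule.add_mem_sup ht ⟨d, rfl⟩
  have hdisj : Disjoint (synorCycles K P n x) (boundariesIn K {y : P // y < x} n) :=
    disjoint_relCompl K _ _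
  have hadd := Submodule.finrank_sup_add_finrank_inf_eq (synorCycles K P n x)
    (boundariesIn K {y : P // y < x} n)
  rw [hsup, hdisj.eq_bot,
    finrank_bot] at hadd
  rw [synorPiece_eq,
    ← (Submodule.equivMapOfInjective _ (coneMap_injective K x n) _).finrank_eq]
  omega

end Construction

/-- For every finite poset `P` there exists a synor complex for `P`:
a strictly `P`-graded complex together with an injective `P`-graded chain map into the
reduced simplicial chain complex of the order complex of `P` satisfying (S1) and (S2)
(equivalently, identifying the complex with its image, a strictly `P`-graded subcomplex
of `C̃_*(P)` satisfying (S1) and (S2)). -/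
theorem synorComplex_exists (P : Type) [PartialOrder P] [Fintype P] :
    Nonempty (SynorComplex K P) := by
  exact ⟨{
    S := synorPiece K P
    graded := by
      intro n x
      rw [synorPiece_eq]
      rintro _ ⟨t, -, rfl⟩
      exact coneMap_mem_supported K x t
    strict := by
      intro n x f hf
      rw [synorPiece_eq] at hf
      obtain ⟨t, ht, rfl⟩ := hf
      rw [cbdry_coneMap_of_mem_cyclesAt K x (synorCycles_le_cyclesAt K _ x ht)]
      exact inclMap_mem_idealPart K ht
    dim_eq := finrank_synorPiece
    quasiIso := synorQuasiIso_of_isLowerSet }⟩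

end
end

section
/- Let P be a finite poset and S_*(P) ⊆ C̃_*(P) a synor complex for P (identified with its image under φ). If ζ ∈ S_m(P) is a cycle and c is an order chain with m+1 elements, then [ζ : c]_j = 0 for every j = 0, …, m; that is, for each position j, the sum of the coefficients in ζ of the order chains that agree with c in all positions except possibly position j is zero. -/
open Finsupp

noncomputable section

variable (K : Type) [Field K]

section FaceMaps
variable (P : Type) [PartialOrder P]

/-- The linear map deleting the `k`-th entry of every order chain. -/
def faceMap {n : ℕ} (k : Fin (n + 1)) : CGrp K P (n + 1) →ₗ[K] CGrp K P n :=
  Finsupp.lmapDomain K K (odel P k)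

theorem cbdry_eq_sum_faceMap {n : ℕ} (f : CGrp K P (n + 1)) :
    cbdry K P n f = ∑ k : Fin (n + 1), ((-1 : K) ^ (k : ℕ)) • faceMap K P k f := by
  induction f using Finsupp.induction_linear with
  | zero => simp
  | add f g hf hg => simp [hf, hg, Finset.sum_add_distrib]
  | single c a => simp [cbdry, faceMap, Finsupp.mapDomain_single]

/-- The simplicial identity `d₀ d_{k+1} = d_k d₀`. -/
theorem faceMap_zero_faceMap_succ {n : ℕ} (k : Fin (n + 1)) (f : CGrp K P (n + 2)) :
    faceMap K P 0 (faceMap K P k.succ f) = faceMap K P k (faceMap K P 0 f) := by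
  simp only [faceMap, Finsupp.lmapDomain_apply, ← Finsupp.mapDomain_comp]
  congr 1
  funext c
  apply Subtype.ext
  funext i
  simp [odel]

/-- The value of `faceMap j ζ` at the `j`-th face of `c` is the coefficient sum `[ζ : c]_j`. -/
theorem faceMap_apply_odel {n : ℕ} (j : Fin (n + 1)) (ζ : CGrp K P (n + 1))
    (c : OChain P (n + 1)) :
    faceMap K P j ζ (odel P j c) =
      ∑ᶠ c' ∈ {c' : OChain P (n + 1) | ∀ r : Fin (n + 1), r ≠ j → c'.1 r = c.1 r}, ζ c' := by
  classical
  have agree_iff (c' : OChain P (n + 1)) :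
      odel P j c' = odel P j c ↔ ∀ r : Fin (n + 1), r ≠ j → c'.1 r = c.1 r := by
    constructor
    · intro h r hr
      obtain ⟨i, rfl⟩ := Fin.exists_succAbove_eq hr
      exact congrFun (congrArg Subtype.val h) i
    · intro h
      exact Subtype.ext (funext fun i => h _ (Fin.succAbove_ne j i))
  rw [finsum_mem_def, finsum_eq_sum_of_support_subset (s := ζ.support)]
  · simp only [faceMap, Finsupp.lmapDomain_apply, Finsupp.mapDomain, Finsupp.sum,
      Finsupp.finsetSum_apply, Finsupp.single_apply, agree_iff, Set.indicator_apply,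
      Set.mem_ofPred_eq]
  · intro c' hc'
    simp only [Function.mem_support, ne_eq, Set.indicator_apply_eq_zero, not_forall] at hc'
    simpa using hc'.2

/-- Chains with a common largest element are determined by their image under `d₀`. -/
theorem eq_zero_of_faceMap_zero_eq_zero {n : ℕ} {x : P} {f : CGrp K P (n + 1)}
    (hf : f ∈ Finsupp.supported K K {c : OChain P (n + 1) | c.1 0 = x})
    (h : faceMap K P 0 f = 0) : f = 0 := by
  refine Finsupp.mapDomain_injOn (M := K) {c : OChain P (n + 1) | c.1 0 = x} (f := odel P 0) ?_
    hf (by simp) ?_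
  · intro c hc d hd hcd
    apply Subtype.ext
    funext i
    refine Fin.cases (hc.trans hd.symm) (fun i => ?_) i
    simpa [odel] using congrFun (congrArg Subtype.val hcd) i
  · simpa [faceMap] using h

theorem faceMap_mem_supported {n : ℕ} (k : Fin (n + 1)) {f : CGrp K P (n + 1)}
    {s : Set (OChain P (n + 1))} {t : Set (OChain P n)} (hf : f ∈ Finsupp.supported K K s)
    (hst : ∀ c ∈ s, odel P k c ∈ t) : faceMap K P k f ∈ Finsupp.supported K K t := by
  classical
  intro d hd
  obtain ⟨c, hc, rfl⟩ := Finset.mem_image.mp (Finsupp.mapDomain_support hd)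
  exact hst c (hf hc)

variable {K P}

theorem SynorComplex.iSup_le_supported (σ : SynorComplex K P) (n : ℕ) (J : Set P) :
    ⨆ x ∈ J, σ.S n x ≤ Finsupp.supported K K {c : OChain P (n + 1) | c.1 0 ∈ J} :=
  iSup₂_le fun x hx => (σ.graded n x).trans
    (Finsupp.supported_mono fun c (hc : c.1 0 = x) => show c.1 0 ∈ J from hc ▸ hx)

/-- If all faces other than `d₀` kill `f`, then `∂ f = d₀ f`. -/
theorem cbdry_eq_faceMap_zero {n : ℕ} {f : CGrp K P (n + 1)}
    (h : ∀ j : Fin (n + 1), j ≠ 0 → faceMap K P j f = 0) :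
    cbdry K P n f = faceMap K P 0 f := by
  rw [cbdry_eq_sum_faceMap, Finset.sum_eq_single 0]
  · simp
  · intro j _ hj
    simp [h j hj]
  · simp

/-- For `f` in a graded piece of a synor complex, `∂ f` is the `d₀`-face of `f`, and the
alternating sum of the other faces vanishes. -/
theorem SynorComplex.faceMap_zero_eq_cbdry (σ : SynorComplex K P) {n : ℕ} {x : P}
    {f : CGrp K P (n + 2)} (hf : f ∈ σ.S (n + 1) x) :
    faceMap K P 0 f = cbdry K P (n + 1) f ∧
      ∑ k : Fin (n + 1), ((-1 : K) ^ (k : ℕ)) • faceMap K P k.succ f = 0 := by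
  have hsum : cbdry K P (n + 1) f =
      faceMap K P 0 f - ∑ k : Fin (n + 1), ((-1 : K) ^ (k : ℕ)) • faceMap K P k.succ f := by
    rw [cbdry_eq_sum_faceMap, Fin.sum_univ_succ]
    simp [pow_succ, sub_eq_add_neg]
  have htop : ∑ k : Fin (n + 1), ((-1 : K) ^ (k : ℕ)) • faceMap K P k.succ f ∈
      Finsupp.supported K K {c : OChain P (n + 1) | c.1 0 = x} :=
    Submodule.sum_mem _ fun k _ => Submodule.smul_mem _ _ <|
      faceMap_mem_supported K P k.succ (σ.graded _ _ hf) fun c (hc : c.1 0 = x) => by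
        change (odel P k.succ c).1 0 = x
        simpa [odel] using hc
  have hface : faceMap K P 0 f ∈
      Finsupp.supported K K {c : OChain P (n + 1) | c.1 0 ∈ Set.Iio x} :=
    faceMap_mem_supported K P 0 (σ.graded _ _ hf) fun c (hc : c.1 0 = x) => by
      have : c.1 1 < c.1 0 := c.2 (by simp)
      change (odel P 0 c).1 0 < x
      simpa [odel, hc] using this
  have hbdry := σ.iSup_le_supported n (Set.Iio x) (σ.strict n x f hf)
  have hzero : faceMap K P 0 f - cbdry K P (n + 1) f = 0 := by
    have hlow := Submodule.sub_mem _ hface hbdry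
    have hdisj : Disjoint {c : OChain P (n + 1) | c.1 0 ∈ Set.Iio x}
        {c : OChain P (n + 1) | c.1 0 = x} :=
      Set.disjoint_left.mpr fun c (hc : c.1 0 < x) (hc' : c.1 0 = x) => hc.ne hc'
    refine Submodule.disjoint_def.mp
      ((Finsupp.disjoint_supported_supported (M := K) (R := K) hdisj)) _ hlow ?_
    rw [hsum, sub_sub_cancel]
    exact htop
  refine ⟨sub_eq_zero.mp hzero, ?_⟩
  rwa [hsum, sub_sub_cancel] at hzero

/-- Every face other than `d₀` vanishes on a synor complex. -/
theorem SynorComplex.faceMap_eq_zero (σ : SynorComplex K P) (n : ℕ) (J : Set P)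
    {f : CGrp K P (n + 1)} (hf : f ∈ ⨆ x ∈ J, σ.S n x) (j : Fin (n + 1)) (hj : j ≠ 0) :
    faceMap K P j f = 0 := by
  induction n generalizing J with
  | zero => exact absurd (Fin.fin_one_eq_zero j) hj
  | succ n ih =>
    suffices h : ⨆ x ∈ J, σ.S (n + 1) x ≤ LinearMap.ker (faceMap K P j) from h hf
    refine iSup₂_le fun x _ g hg => ?_
    obtain ⟨i, rfl⟩ := Fin.exists_succ_eq.mpr hj
    obtain ⟨hface, hsum⟩ := σ.faceMap_zero_eq_cbdry hg
    have htail (k : Fin (n + 1)) (hk : k ≠ 0) : faceMap K P k (faceMap K P 0 g) = 0 :=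
      ih (Set.Iio x) (hface ▸ σ.strict n x g hg) k hk
    have hcycle : cbdry K P n (faceMap K P 0 g) = 0 := by
      rw [cbdry_eq_sum_faceMap]
      simpa [map_sum, faceMap_zero_faceMap_succ] using congrArg (faceMap K P 0) hsum
    refine eq_zero_of_faceMap_zero_eq_zero K P (x := x)
      (faceMap_mem_supported K P i.succ (σ.graded _ _ hg) fun c (hc : c.1 0 = x) => by
        change (odel P i.succ c).1 0 = x
        simpa [odel] using hc) ?_
    rw [faceMap_zero_faceMap_succ]
    by_cases hi : i = 0
    · rw [hi, ← cbdry_eq_faceMap_zero htail, hcycle]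
    · exact htail i hi

end FaceMaps

/-- Let `P` be a finite poset and `S_*(P) ⊆ C̃_*(P)` a synor complex.
If `ζ ∈ S_m(P)` is a cycle and `c` an order chain with `m+1` elements, then
`[ζ : c]_j = 0` for every `j = 0, …, m`: for each position `j`, the sum of the
coefficients in `ζ` of the order chains agreeing with `c` in all positions except
possibly position `j` is zero. -/
theorem synor_cycle_coefficient_sum (P : Type) [PartialOrder P] [Fintype P]
    (σ : SynorComplex K P) (m : ℕ) (ζ : CGrp K P (m + 1))
    (hcyc : ζ ∈ cyclesAt K P (m + 1))
    (hS : ζ ∈ idealPart K P σ.S Set.univ (m + 1))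
    (c : OChain P (m + 1)) (j : Fin (m + 1)) :
    ∑ᶠ c' ∈ {c' : OChain P (m + 1) | ∀ r : Fin (m + 1), r ≠ j → c'.1 r = c.1 r},
      ζ c' = 0 := by
  rw [← faceMap_apply_odel]
  have hface := σ.faceMap_eq_zero m Set.univ hS
  have hzero : faceMap K P j ζ = 0 := by
    by_cases hj : j = 0
    · rw [hj, ← cbdry_eq_faceMap_zero hface]
      exact hcyc
    · exact hface j hj
  rw [hzero, Finsupp.zero_apply]

end
end
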